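/- Let r ≥ 3, let ℓ, m_3, ..., m_r and n_1, ..., n_s be nonnegative integers with cyclic conventions, and let k be an integer with -ℓ ≤ k ≤ ℓ+1. Then the cyclic products satisfy C(m_3, ..., m_r; n; k) = ((q;q)_{ℓ-k+1} (q;q)_{ℓ+k} (q;q)_{m_r+m_3+1} / ((q;q)_{m_3+ℓ+1} (q;q)_{m_r+ℓ+1})) · C(ℓ, m_3, ..., m_r; n; k), where C(m_3, ..., m_r; n; k) is the cyclic product for the vector (m_3, ..., m_r) and C(ℓ, m_3, ..., m_r; n; k) is the cyclic product for the vector (ℓ, m_3, ..., m_r). -/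

import Mathlib

open Finset

noncomputable section

/-- The variable `q`, as a rational function over `ℚ`. -/
def q : RatFunc ℚ := RatFunc.X

/-- The `q`-integer `[n] = (1 - q^n)/(1 - q)`. -/
def qint (n : ℕ) : RatFunc ℚ := (1 - q ^ n) / (1 - q)

/-- The `q`-factorial `[n]! = [1][2]⋯[n]`, with `[0]! = 1`. -/
def qfact (n : ℕ) : RatFunc ℚ := ∏ i ∈ Finset.range n, qint (i + 1)

/-- The Gaussian (q-binomial) coefficient `[N choose K]`, equal to
`[N]!/([K]![N-K]!)` if `0 ≤ K ≤ N`, and `0` otherwise. -/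
def qbinom (N K : ℤ) : RatFunc ℚ :=
  if 0 ≤ K ∧ K ≤ N then qfact N.toNat / (qfact K.toNat * qfact (N - K).toNat) else 0

/-- The `q`-Pochhammer symbol `(q;q)_n = (1-q)(1-q²)⋯(1-qⁿ)`, with `(q;q)_0 = 1`. -/
def qpoch (n : ℕ) : RatFunc ℚ := ∏ i ∈ Finset.range n, (1 - q ^ (i + 1))

/-- The cyclic product
`C(m_1, …, m_r; n; k) = Π_{i=1}^{r} [m_i+m_{i+1}+1 choose m_i+k]
  Π_{j=1}^{s} [n_j+n_{j+1} choose n_j+k]`,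
where `(m_1, …, m_r)` and `(n_1, …, n_s)` are given as `m n : ℕ → ℕ`
on `0, …, r-1` and `0, …, s-1`, with cyclic successor `(i+1) % r`. -/
def Cprod (r s : ℕ) (m n : ℕ → ℕ) (k : ℤ) : RatFunc ℚ :=
  (∏ i ∈ Finset.range r,
      qbinom ((m i : ℤ) + (m ((i + 1) % r) : ℤ) + 1) ((m i : ℤ) + k)) *
    ∏ j ∈ Finset.range s,
      qbinom ((n j : ℤ) + (n ((j + 1) % s) : ℤ)) ((n j : ℤ) + k)

theorem one_sub_q_pow_ne_zero (n : ℕ) : (1 : RatFunc ℚ) - q ^ (n + 1) ≠ 0 := by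
  intro h
  have hX : algebraMap (Polynomial ℚ) (RatFunc ℚ) (Polynomial.X ^ (n + 1)) =
      algebraMap (Polynomial ℚ) (RatFunc ℚ) 1 := by
    rw [map_pow, RatFunc.algebraMap_X, map_one]
    exact (sub_eq_zero.mp h).symm
  have hdeg := congrArg Polynomial.natDegree (RatFunc.algebraMap_injective ℚ hX)
  simp at hdeg

theorem qpoch_ne_zero (n : ℕ) : qpoch n ≠ 0 :=
  Finset.prod_ne_zero_iff.mpr fun i _ => one_sub_q_pow_ne_zero i

theorem qfact_eq_qpoch_div (n : ℕ) : qfact n = qpoch n / (1 - q) ^ n := by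
  simp [qfact, qpoch, qint, Finset.prod_div_distrib]

/-- The `q`-binomial coefficient in terms of `q`-Pochhammer symbols. -/
theorem qbinom_add (i j : ℕ) :
    qbinom ((i : ℤ) + j) i = qpoch (i + j) / (qpoch i * qpoch j) := by
  have hq : (1 : RatFunc ℚ) - q ≠ 0 := by simpa using one_sub_q_pow_ne_zero 0
  have hi := qpoch_ne_zero i
  have hj := qpoch_ne_zero j
  have h : (0 : ℤ) ≤ i ∧ (i : ℤ) ≤ i + j := by omega
  rw [qbinom, if_pos h, add_sub_cancel_left, ← Nat.cast_add, Int.toNat_natCast,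
    Int.toNat_natCast, Int.toNat_natCast]
  simp only [qfact_eq_qpoch_div, pow_add]
  field_simp

theorem qbinom_of_add_eq {N K : ℤ} {i j : ℕ} (hK : K = i) (hN : N = i + j) :
    qbinom N K = qpoch (i + j) / (qpoch i * qpoch j) := by
  subst hK hN
  exact qbinom_add i j

/-- Inserting `ℓ` between cyclic neighbours `a` and `b`. -/
theorem qbinom_insert (a b ℓ : ℕ) (k : ℤ) (hk1 : -(ℓ : ℤ) ≤ k) (hk2 : k ≤ (ℓ : ℤ) + 1) :
    qbinom ((a : ℤ) + b + 1) (a + k) =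
      (qpoch ((ℓ : ℤ) - k + 1).toNat * qpoch ((ℓ : ℤ) + k).toNat * qpoch (a + b + 1)) /
          (qpoch (b + ℓ + 1) * qpoch (a + ℓ + 1)) *
        (qbinom ((ℓ : ℤ) + b + 1) (ℓ + k) * qbinom ((a : ℤ) + ℓ + 1) (a + k)) := by
  by_cases ha : 0 ≤ (a : ℤ) + k
  · by_cases hb : 0 ≤ (b : ℤ) + 1 - k
    · obtain ⟨x, hx⟩ := Int.eq_ofNat_of_zero_le ha
      obtain ⟨y, hy⟩ := Int.eq_ofNat_of_zero_le hb
      obtain ⟨u, hu⟩ := Int.eq_ofNat_of_zero_le (show 0 ≤ (ℓ : ℤ) + k by omega)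
      obtain ⟨v, hv⟩ := Int.eq_ofNat_of_zero_le (show 0 ≤ (ℓ : ℤ) - k + 1 by omega)
      rw [qbinom_of_add_eq (i := x) (j := y) hx (by omega),
        qbinom_of_add_eq (i := u) (j := y) hu (by omega),
        qbinom_of_add_eq (i := x) (j := v) hx (by omega), hu, hv,
        Int.toNat_natCast, Int.toNat_natCast,
        show a + b + 1 = x + y by omega, show b + ℓ + 1 = u + y by omega,
        show a + ℓ + 1 = x + v by omega]
      have := qpoch_ne_zero x
      have := qpoch_ne_zero y
      have := qpoch_ne_zero u
      have := qpoch_ne_zero v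
      have := qpoch_ne_zero (u + y)
      have := qpoch_ne_zero (x + v)
      field_simp
    · have h1 : qbinom ((a : ℤ) + b + 1) (a + k) = 0 := if_neg (by omega)
      have h2 : qbinom ((ℓ : ℤ) + b + 1) (ℓ + k) = 0 := if_neg (by omega)
      rw [h1, h2, zero_mul, mul_zero]
  · have h1 : qbinom ((a : ℤ) + b + 1) (a + k) = 0 := if_neg (by omega)
    have h2 : qbinom ((a : ℤ) + ℓ + 1) (a + k) = 0 := if_neg (by omega)
    rw [h1, h2, mul_zero, mul_zero]

/-- A product over a cycle of length `t + 1`, with the wrap-around term split off. -/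
theorem prod_range_succ_cyclic {M : Type*} [CommMonoid M] (f : ℕ → ℕ → M) (t : ℕ) :
    ∏ i ∈ Finset.range (t + 1), f i ((i + 1) % (t + 1)) =
      (∏ i ∈ Finset.range t, f i (i + 1)) * f t 0 := by
  rw [Finset.prod_range_succ, Nat.mod_self]
  congr 1
  refine Finset.prod_congr rfl fun i hi => ?_
  rw [Nat.mod_eq_of_lt (by have := Finset.mem_range.mp hi; omega)]

/-- Recombination of cyclic products: for `r ≥ 3`, nonnegative `ℓ`,
`m_3, …, m_r`, `n_1, …, n_s`, and an integer `k` with `-ℓ ≤ k ≤ ℓ+1`,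
`C(m_3, …, m_r; n; k)
  = ((q;q)_{ℓ-k+1} (q;q)_{ℓ+k} (q;q)_{m_r+m_3+1} /
      ((q;q)_{m_3+ℓ+1} (q;q)_{m_r+ℓ+1})) C(ℓ, m_3, …, m_r; n; k)`.
Here `m_3, …, m_r` are `m 2, …, m (r-1)`, so the vector `(m_3, …, m_r)` is
`fun i => m (i + 2)` of length `r - 2` and `(ℓ, m_3, …, m_r)` is
`fun i => if i = 0 then ℓ else m (i + 1)` of length `r - 1`. -/
theorem Cprod_recombine (r s : ℕ) (hr : 3 ≤ r) (ℓ : ℕ) (m n : ℕ → ℕ) (k : ℤ)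
    (hk1 : -(ℓ : ℤ) ≤ k) (hk2 : k ≤ (ℓ : ℤ) + 1) :
    Cprod (r - 2) s (fun i => m (i + 2)) n k =
      (qpoch ((ℓ : ℤ) - k + 1).toNat * qpoch ((ℓ : ℤ) + k).toNat *
          qpoch (m (r - 1) + m 2 + 1)) /
          (qpoch (m 2 + ℓ + 1) * qpoch (m (r - 1) + ℓ + 1)) *
        Cprod (r - 1) s (fun i => if i = 0 then ℓ else m (i + 1)) n k := by
  obtain ⟨t, rfl⟩ : ∃ t, r = t + 3 := ⟨r - 3, by omega⟩
  simp only [show t + 3 - 2 = t + 1 by omega, show t + 3 - 1 = t + 1 + 1 by omega, Cprod]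
  rw [prod_range_succ_cyclic
      (fun i j => qbinom ((m (i + 2) : ℤ) + (m (j + 2) : ℤ) + 1) ((m (i + 2) : ℤ) + k)),
    prod_range_succ_cyclic
      (fun i j => qbinom (((if i = 0 then ℓ else m (i + 1) : ℕ) : ℤ) +
        ((if j = 0 then ℓ else m (j + 1) : ℕ) : ℤ) + 1)
        (((if i = 0 then ℓ else m (i + 1) : ℕ) : ℤ) + k)),
    Finset.prod_range_succ']
  simp only [Nat.add_eq_zero_iff, one_ne_zero, and_false, if_false, if_true, zero_add]
  rw [qbinom_insert (m (t + 2)) (m 2) ℓ k hk1 hk2]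
  ring

end
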